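/- arXiv:1612.02733 — 2 statements merged into one kernel-verified Lean document; each statement's English description precedes it below -/
import Mathlib

section
/- Let Γ be a simple graph with vertex set Λ and V : Λ → B(K) an isometric Nica-covariant family on a complex Hilbert space K. The range projections P_i = V i (V i)* pairwise commute. Moreover, for every finite subset U ⊆ Λ: if U is a clique then ∏_{i∈U} P_i = V_U (V_U)*, and if U contains two distinct non-adjacent vertices then ∏_{i∈U} P_i = 0. -/
open scoped ComplexOrder

theorem commute_mul_star_self {A : Type*} [Semigroup A] [StarMul A] {a b : A}
    (hab : Commute a b) (hab' : Commute (star a) b) :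
    Commute (a * star a) (b * star b) :=
  (hab.mul_left hab').mul_right ((commute_star_comm.mp hab').mul_left hab.star_star)

theorem mul_star_self_mul_mul_star_self_eq_zero {A : Type*} [SemigroupWithZero A] [Star A]
    {a b : A} (hab : star a * b = 0) : (a * star a) * (b * star b) = 0 := by
  rw [mul_assoc, ← mul_assoc (star a), hab, zero_mul, mul_zero]

section noncommProd

variable {ι A : Type*}

theorem noncommProd_eq_zero_of_mul_eq_zero [MonoidWithZero A] {s : Finset ι} {f : ι → A}
    (hf : (s : Set ι).Pairwise (Function.onFun Commute f)) {i j : ι} (hi : i ∈ s) (hj : j ∈ s)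
    (hij : i ≠ j) (hzero : f i * f j = 0) : s.noncommProd f hf = 0 := by
  classical
  have hj' : j ∈ s.erase i := Finset.mem_erase.mpr ⟨hij.symm, hj⟩
  have hf' : (s.erase i : Set ι).Pairwise (Function.onFun Commute f) :=
    hf.mono (Finset.coe_subset.mpr (s.erase_subset i))
  rw [← Finset.mul_noncommProd_erase s hi f hf hf', ← Finset.mul_noncommProd_erase _ hj' f hf',
    ← mul_assoc, hzero, zero_mul]

variable [Monoid A] [StarMul A]

theorem star_noncommProd (s : Finset ι) (f : ι → A)
    (hf : (s : Set ι).Pairwise (Function.onFun Commute f)) :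
    star (s.noncommProd f hf) =
      s.noncommProd (fun i => star (f i)) (hf.imp fun _ _ h => h.star_star) := by
  induction s using Finset.cons_induction with
  | empty => simp only [Finset.noncommProd_empty, star_one]
  | cons i s hi ih =>
    rw [Finset.noncommProd_cons, star_mul, ih, Finset.noncommProd_cons']

theorem noncommProd_mul_star_self (s : Finset ι) (f : ι → A)
    (hf : (s : Set ι).Pairwise (Function.onFun Commute f))
    (hf' : (s : Set ι).Pairwise fun i j => Commute (star (f i)) (f j)) :
    s.noncommProd (fun i => f i * star (f i))
        (fun _ hi _ hj hij => commute_mul_star_self (hf hi hj hij) (hf' hi hj hij)) =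
      s.noncommProd f hf * star (s.noncommProd f hf) := by
  rw [star_noncommProd]
  exact Finset.noncommProd_mul_distrib _ _ _ _ hf'

end noncommProd

/-- A family indexed by the vertices of `Γ` is Nica-covariant if adjacent vertices have
`*`-commuting values and the values at distinct non-adjacent vertices have orthogonal ranges. The
latter is encoded as `star (V i) * V j = 0`, which makes sense in any monoid with zero and an
involution. -/
structure IsNicaCovariant {Λ A : Type*} [MonoidWithZero A] [StarMul A] (Γ : SimpleGraph Λ)
    (V : Λ → A) : Prop where
  commute {i j : Λ} (hij : Γ.Adj i j) : Commute (V i) (V j)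
  star_commute {i j : Λ} (hij : Γ.Adj i j) : Commute (star (V i)) (V j)
  star_mul_eq_zero {i j : Λ} (hne : i ≠ j) (hij : ¬ Γ.Adj i j) : star (V i) * V j = 0

namespace IsNicaCovariant

variable {Λ A : Type*} [MonoidWithZero A] [StarMul A] {Γ : SimpleGraph Λ} {V : Λ → A}

theorem pairwise_commute (hV : IsNicaCovariant Γ V) {U : Set Λ} (hU : Γ.IsClique U) :
    U.Pairwise (Function.onFun Commute V) :=
  hU.imp fun _ _ => hV.commute

theorem mul_star_self_mul_mul_star_self_eq_zero (hV : IsNicaCovariant Γ V) {i j : Λ}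
    (hne : i ≠ j) (hij : ¬ Γ.Adj i j) : (V i * star (V i)) * (V j * star (V j)) = 0 :=
  _root_.mul_star_self_mul_mul_star_self_eq_zero (hV.star_mul_eq_zero hne hij)

theorem commute_mul_star_self (hV : IsNicaCovariant Γ V) (i j : Λ) :
    Commute (V i * star (V i)) (V j * star (V j)) := by
  rcases eq_or_ne i j with rfl | hne
  · exact Commute.refl _
  by_cases hij : Γ.Adj i j
  · exact _root_.commute_mul_star_self (hV.commute hij) (hV.star_commute hij)
  · have hji : ¬ Γ.Adj j i := fun h => hij h.symm
    exact (hV.mul_star_self_mul_mul_star_self_eq_zero hne hij).trans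
      (hV.mul_star_self_mul_mul_star_self_eq_zero hne.symm hji).symm

end IsNicaCovariant

theorem stmt_7_general {Λ A : Type*} [MonoidWithZero A] [StarMul A] {Γ : SimpleGraph Λ}
    {V : Λ → A} (hV : IsNicaCovariant Γ V) :
    (∀ i j, Commute (V i * star (V i)) (V j * star (V j))) ∧
    (∀ (U : Finset Λ) (hU : Γ.IsClique (U : Set Λ)),
      U.noncommProd (fun i => V i * star (V i)) (fun i _ j _ _ => hV.commute_mul_star_self i j) =
        U.noncommProd V (hV.pairwise_commute hU) *
          star (U.noncommProd V (hV.pairwise_commute hU))) ∧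
    (∀ U : Finset Λ, (∃ i ∈ U, ∃ j ∈ U, i ≠ j ∧ ¬ Γ.Adj i j) →
      U.noncommProd (fun i => V i * star (V i))
        (fun i _ j _ _ => hV.commute_mul_star_self i j) = 0) := by
  refine ⟨hV.commute_mul_star_self, fun U hU => ?_, ?_⟩
  · exact noncommProd_mul_star_self U V _ (hU.imp fun _ _ => hV.star_commute)
  · rintro U ⟨i, hi, j, hj, hne, hij⟩
    exact noncommProd_eq_zero_of_mul_eq_zero _ hi hj hne
      (hV.mul_star_self_mul_mul_star_self_eq_zero hne hij)

open Classical in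
/-- For an isometric Nica-covariant family `V` on a simple graph `Γ`, the range projections
`P i = V i (V i)*` pairwise commute; moreover for a finite `U ⊆ Λ`, if `U` is a clique then
`∏_{i∈U} P i = V_U V_U*`, and if `U` contains two distinct non-adjacent vertices then
`∏_{i∈U} P i = 0`. -/
theorem stmt_7 {Λ : Type} (Γ : SimpleGraph Λ)
    {K : Type} [NormedAddCommGroup K] [InnerProductSpace ℂ K] [CompleteSpace K]
    (V : Λ → (K →L[ℂ] K))
    -- each `V i` is an isometry:
    (hiso : ∀ i, ContinuousLinearMap.adjoint (V i) * V i = 1)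
    -- Nica covariance: adjacent vertices give `*`-commuting isometries:
    (hnc₁ : ∀ i j, Γ.Adj i j → V i * V j = V j * V i ∧
      ContinuousLinearMap.adjoint (V i) * V j = V j * ContinuousLinearMap.adjoint (V i))
    -- non-adjacent vertices give isometries with orthogonal ranges:
    (hnc₂ : ∀ i j, i ≠ j → ¬ Γ.Adj i j → ContinuousLinearMap.adjoint (V i) * V j = 0)
    -- `VU U` is the product `∏_{i ∈ U} V i`, well defined for cliques `U`:
    (VU : Finset Λ → (K →L[ℂ] K))
    (hVU : ∀ (U : Finset Λ) (hU : Γ.IsClique (U : Set Λ)),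
      VU U = U.noncommProd V (fun i hi j hj hne => (hnc₁ i j (hU hi hj hne)).1))
    -- `PU U` is the product `∏_{i ∈ U} V i (V i)*` of the range projections, well defined
    -- since these pairwise commute:
    (PU : Finset Λ → (K →L[ℂ] K))
    (hPU : ∀ (U : Finset Λ)
      (hc : (U : Set Λ).Pairwise
        (Function.onFun Commute (fun i => V i * ContinuousLinearMap.adjoint (V i)))),
      PU U = U.noncommProd (fun i => V i * ContinuousLinearMap.adjoint (V i)) hc) :
    -- the range projections pairwise commute:
    (∀ i j, Commute (V i * ContinuousLinearMap.adjoint (V i))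
      (V j * ContinuousLinearMap.adjoint (V j))) ∧
    -- on cliques the product of range projections is the range projection of `V_U`:
    (∀ U : Finset Λ, Γ.IsClique (U : Set Λ) →
      PU U = VU U * ContinuousLinearMap.adjoint (VU U)) ∧
    -- if `U` contains two distinct non-adjacent vertices, the product vanishes:
    (∀ U : Finset Λ, (∃ i ∈ U, ∃ j ∈ U, i ≠ j ∧ ¬ Γ.Adj i j) → PU U = 0) := by
  obtain ⟨hcomm, hclique, hzero⟩ := stmt_7_general (Γ := Γ) (V := V)
    ⟨fun hij => (hnc₁ _ _ hij).1, fun hij => (hnc₁ _ _ hij).2, hnc₂ _ _⟩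
  exact ⟨hcomm, fun U hU => by rw [hPU, hVU U hU]; exact hclique U hU,
    fun U hU => (hPU U _).trans (hzero U hU)⟩
end

section
/- Let Γ be a finite simple graph with vertex set Λ, H a complex Hilbert space, and T : Λ → B(H) a family of operators such that T i and T j commute whenever i and j are adjacent in Γ. For V ⊆ Λ set Z_V = ∑_{U ⊆ V, U a clique} (−1)^{|U|} T_U (T_U)*. For a clique V let N_V = { λ ∈ Λ : λ ∉ V and λ is adjacent to every vertex of V }, with N_∅ = Λ. Then for every clique F ⊆ Λ, ∑_{W a clique with F ⊆ W} T_{W∖F} Z_{N_W} (T_{W∖F})* = I, the sum being over all cliques W of Γ containing F (note W∖F is again a clique). -/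
open scoped ComplexOrder

/-!
Expand each `Z_{N_W}`: for a clique `W ⊇ F` and a clique `U ⊆ N_W`, the union `Y = W ∪ U` is a
clique and `T_{W∖F} T_U = T_{Y∖F}`. The pairs `(W, U)` correspond bijectively to the pairs `(Y, U)`
with `Y ⊇ F` a clique and `U ⊆ Y ∖ F` arbitrary, so the coefficient of `T_{Y∖F} (T_{Y∖F})*` is
`∑_{U ⊆ Y∖F} (-1)^|U|`, which vanishes unless `Y = F`.
-/

section AlternatingSum

variable {α 𝕜 M : Type*} [DecidableEq α] [Ring 𝕜] [AddCommGroup M] [Module 𝕜 M]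

theorem sum_powerset_neg_one_pow_card_eq_ite (s : Finset α) :
    ∑ U ∈ s.powerset, (-1 : 𝕜) ^ U.card = if s = ∅ then 1 else 0 := by
  exact_mod_cast congrArg (Int.cast : ℤ → 𝕜) (Finset.sum_powerset_neg_one_pow_card (x := s))

theorem sum_sum_powerset_sdiff_neg_one_pow_card_smul {C : Finset (Finset α)} {F : Finset α}
    (hF : F ∈ C) (hC : ∀ Y ∈ C, F ⊆ Y) (g : Finset α → M) :
    ∑ Y ∈ C, ∑ U ∈ (Y \ F).powerset, (-1 : 𝕜) ^ U.card • g Y = g F := by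
  have coefficient : ∀ Y ∈ C, ∑ U ∈ (Y \ F).powerset, (-1 : 𝕜) ^ U.card • g Y =
      if Y = F then g Y else 0 := by
    intro Y hY
    have hempty : Y \ F = ∅ ↔ Y = F := by
      rw [Finset.sdiff_eq_empty_iff_subset]
      exact ⟨fun h => h.antisymm (hC Y hY), fun h => h.subset⟩
    rw [← Finset.sum_smul, sum_powerset_neg_one_pow_card_eq_ite, ite_smul, one_smul, zero_smul]
    exact if_congr hempty rfl rfl
  rw [Finset.sum_congr rfl coefficient, Finset.sum_ite_eq' C F g, if_pos hF]

end AlternatingSum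

section CliqueLink

variable {V : Type*} {G : SimpleGraph V}

/-- The neighbourhood `N_s` of a set `s` of vertices: the vertices outside `s` that are adjacent
to every vertex of `s`. For a clique `s` these are the vertices of the link of `s` in the clique
complex of `G`. -/
def cliqueLink (G : SimpleGraph V) (s : Set V) : Set V :=
  {v | v ∉ s ∧ ∀ w ∈ s, G.Adj v w}

theorem isClique_union_and_disjoint_iff {s t : Set V} :
    G.IsClique (s ∪ t) ∧ Disjoint s t ↔ G.IsClique s ∧ G.IsClique t ∧ t ⊆ cliqueLink G s := by
  have : Std.Symm G.Adj := G.symm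
  rw [SimpleGraph.IsClique, Set.pairwise_union_of_symm]
  constructor
  · rintro ⟨⟨hs, ht, hst⟩, hdisj⟩
    refine ⟨hs, ht, fun v hv => ⟨hdisj.notMem_of_mem_right hv, fun w hw => ?_⟩⟩
    exact (hst w hw v hv (hdisj.ne_of_mem hw hv)).symm
  · rintro ⟨hs, ht, hlink⟩
    exact ⟨⟨hs, ht, fun w hw v hv _ => ((hlink hv).2 w hw).symm⟩,
      Set.disjoint_right.2 fun v hv => (hlink hv).1⟩

theorem isClique_coe_union_and_disjoint_iff [DecidableEq V] {W U L : Finset V}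
    (hL : (L : Set V) = cliqueLink G W) :
    G.IsClique ((W ∪ U : Finset V) : Set V) ∧ Disjoint W U ↔
      G.IsClique (W : Set V) ∧ G.IsClique (U : Set V) ∧ U ⊆ L := by
  rw [Finset.coe_union, ← Finset.disjoint_coe, ← Finset.coe_subset, hL]
  exact isClique_union_and_disjoint_iff

variable [DecidableEq V] {F : Finset V} {C : Finset (Finset V)} {N : Finset V → Finset V}

theorem mem_and_clique_subset_link_iff
    (hC : ∀ W : Finset V, W ∈ C ↔ G.IsClique (W : Set V) ∧ F ⊆ W)
    (hN : ∀ W ∈ C, (N W : Set V) = cliqueLink G W) (W U : Finset V) :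
    (W ∈ C ∧ U ⊆ N W ∧ G.IsClique (U : Set V)) ↔
      (G.IsClique ((W ∪ U : Finset V) : Set V) ∧ Disjoint W U) ∧ F ⊆ W := by
  constructor
  · rintro ⟨hW, hUN, hU⟩
    obtain ⟨hWclique, hFW⟩ := (hC W).1 hW
    exact ⟨(isClique_coe_union_and_disjoint_iff (hN W hW)).2 ⟨hWclique, hU, hUN⟩, hFW⟩
  · rintro ⟨hunion, hFW⟩
    have hW : W ∈ C :=
      (hC W).2 ⟨hunion.1.subset (Finset.coe_subset.2 Finset.subset_union_left), hFW⟩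
    obtain ⟨-, hU, hUN⟩ := (isClique_coe_union_and_disjoint_iff (hN W hW)).1 hunion
    exact ⟨hW, hUN, hU⟩

theorem sum_sum_cliques_link_eq_sum_sum_powerset_sdiff [DecidableRel G.Adj]
    {M : Type*} [AddCommMonoid M]
    (hC : ∀ W : Finset V, W ∈ C ↔ G.IsClique (W : Set V) ∧ F ⊆ W)
    (hN : ∀ W ∈ C, (N W : Set V) = cliqueLink G W) (f : Finset V → Finset V → M) :
    ∑ W ∈ C, ∑ U ∈ (N W).powerset.filter (fun U : Finset V => G.IsClique (U : Set V)), f (W ∪ U) U =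
      ∑ Y ∈ C, ∑ U ∈ (Y \ F).powerset, f Y U := by
  have mem_left (W U : Finset V) :
      (⟨W, U⟩ : (_ : Finset V) × Finset V) ∈ C.sigma (fun W =>
        (N W).powerset.filter (fun U : Finset V => G.IsClique (U : Set V))) ↔
      (G.IsClique ((W ∪ U : Finset V) : Set V) ∧ Disjoint W U) ∧ F ⊆ W := by
    rw [Finset.mem_sigma, Finset.mem_filter, Finset.mem_powerset,
      mem_and_clique_subset_link_iff hC hN]
  have mem_right (Y U : Finset V) :
      (⟨Y, U⟩ : (_ : Finset V) × Finset V) ∈ C.sigma (fun Y => (Y \ F).powerset) ↔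
      (G.IsClique (Y : Set V) ∧ F ⊆ Y) ∧ U ⊆ Y ∧ Disjoint U F := by
    rw [Finset.mem_sigma, hC, Finset.mem_powerset, Finset.subset_sdiff]
  rw [Finset.sum_sigma', Finset.sum_sigma']
  refine Finset.sum_bij' (fun p _ => ⟨p.1 ∪ p.2, p.2⟩) (fun p _ => ⟨p.1 \ p.2, p.2⟩)
    ?_ ?_ ?_ ?_ (fun _ _ => rfl)
  · rintro ⟨W, U⟩ h
    obtain ⟨⟨hclique, hdisj⟩, hFW⟩ := (mem_left W U).1 h
    exact (mem_right _ _).2 ⟨⟨hclique, hFW.trans Finset.subset_union_left⟩,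
      Finset.subset_union_right, (hdisj.mono_left hFW).symm⟩
  · rintro ⟨Y, U⟩ h
    obtain ⟨⟨hclique, hFY⟩, hUY, hdisj⟩ := (mem_right Y U).1 h
    refine (mem_left _ _).2 ⟨⟨?_, Finset.sdiff_disjoint⟩, Finset.subset_sdiff.2 ⟨hFY, hdisj.symm⟩⟩
    rwa [Finset.sdiff_union_of_subset hUY]
  · rintro ⟨W, U⟩ h
    simp only [Finset.union_sdiff_cancel_right ((mem_left W U).1 h).1.2]
  · rintro ⟨Y, U⟩ h
    simp only [Finset.sdiff_union_of_subset ((mem_right Y U).1 h).2.1]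

end CliqueLink

section CliqueProduct

variable {V M : Type*} [DecidableEq V] [Monoid M] {G : SimpleGraph V} {T : V → M}
  {hcomm : ∀ i j, G.Adj i j → Commute (T i) (T j)} {P : Finset V → M}

theorem cliqueProd_union_of_disjoint
    (hP : ∀ (U : Finset V) (hU : G.IsClique (U : Set V)),
      P U = U.noncommProd T (fun i hi j hj hne => hcomm i j (hU hi hj hne)))
    {A B : Finset V} (hAB : G.IsClique ((A ∪ B : Finset V) : Set V)) (hdisj : Disjoint A B) :
    P (A ∪ B) = P A * P B := by
  have hA : G.IsClique (A : Set V) := hAB.subset (Finset.coe_subset.2 Finset.subset_union_left)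
  have hB : G.IsClique (B : Set V) := hAB.subset (Finset.coe_subset.2 Finset.subset_union_right)
  rw [hP _ hAB, hP A hA, hP B hB]
  exact Finset.noncommProd_union_of_disjoint hdisj T _

theorem cliqueProd_sdiff_mul
    (hP : ∀ (U : Finset V) (hU : G.IsClique (U : Set V)),
      P U = U.noncommProd T (fun i hi j hj hne => hcomm i j (hU hi hj hne)))
    {F W U : Finset V} (hWU : G.IsClique ((W ∪ U : Finset V) : Set V)) (hdisj : Disjoint W U)
    (hFW : F ⊆ W) : P (W \ F) * P U = P ((W ∪ U) \ F) := by
  have hsdiff : (W ∪ U) \ F = W \ F ∪ U := by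
    rw [Finset.union_sdiff_distrib, Finset.sdiff_eq_self_of_disjoint (hdisj.mono_left hFW).symm]
  have hclique : G.IsClique ((W \ F ∪ U : Finset V) : Set V) :=
    hWU.subset (Finset.coe_subset.2 (Finset.union_subset_union_left Finset.sdiff_subset))
  rw [hsdiff, cliqueProd_union_of_disjoint hP hclique (hdisj.mono_left Finset.sdiff_subset)]

end CliqueProduct

theorem mul_sum_smul_mul_star_mul_star {ι 𝕜 R : Type*} [CommSemiring 𝕜] [Semiring R] [StarMul R]
    [Algebra 𝕜 R] (s : Finset ι) (c : ι → 𝕜) (a : R) (b : ι → R) :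
    a * (∑ i ∈ s, c i • (b i * star (b i))) * star a =
      ∑ i ∈ s, c i • (a * b i * star (a * b i)) := by
  simp only [Finset.mul_sum, Finset.sum_mul, mul_smul_comm, smul_mul_assoc, star_mul, mul_assoc]

theorem stmt_10_general {Λ 𝕜 R : Type*} [DecidableEq Λ] (Γ : SimpleGraph Λ) [DecidableRel Γ.Adj]
    [CommRing 𝕜] [Ring R] [StarMul R] [Algebra 𝕜 R] (T : Λ → R)
    (hcomm : ∀ i j, Γ.Adj i j → Commute (T i) (T j))
    (TU : Finset Λ → R)
    (hTU : ∀ (U : Finset Λ) (hU : Γ.IsClique (U : Set Λ)),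
      TU U = U.noncommProd T (fun i hi j hj hne => hcomm i j (hU hi hj hne)))
    (Z : Finset Λ → R)
    (hZ : ∀ V : Finset Λ, Z V =
      ∑ U ∈ V.powerset.filter (fun U : Finset Λ => Γ.IsClique (U : Set Λ)),
        (-1 : 𝕜) ^ U.card • (TU U * star (TU U)))
    {F : Finset Λ} (hF : Γ.IsClique (F : Set Λ))
    (C : Finset (Finset Λ)) (hC : ∀ W : Finset Λ, W ∈ C ↔ Γ.IsClique (W : Set Λ) ∧ F ⊆ W)
    (N : Finset Λ → Finset Λ) (hN : ∀ W ∈ C, (N W : Set Λ) = cliqueLink Γ W) :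
    ∑ W ∈ C, TU (W \ F) * Z (N W) * star (TU (W \ F)) = 1 := by
  have hTU_empty : TU ∅ = 1 := (hTU ∅ (by simp)).trans (Finset.noncommProd_empty T _)
  calc ∑ W ∈ C, TU (W \ F) * Z (N W) * star (TU (W \ F))
      = ∑ W ∈ C, ∑ U ∈ (N W).powerset.filter (fun U : Finset Λ => Γ.IsClique (U : Set Λ)),
          (-1 : 𝕜) ^ U.card • (TU ((W ∪ U) \ F) * star (TU ((W ∪ U) \ F))) := by
        refine Finset.sum_congr rfl fun W hW => ?_
        rw [hZ, mul_sum_smul_mul_star_mul_star]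
        refine Finset.sum_congr rfl fun U hU => ?_
        obtain ⟨hUN, hUclique⟩ := Finset.mem_filter.1 hU
        obtain ⟨⟨hunion, hdisj⟩, hFW⟩ := (mem_and_clique_subset_link_iff hC hN W U).1
          ⟨hW, Finset.mem_powerset.1 hUN, hUclique⟩
        rw [cliqueProd_sdiff_mul hTU hunion hdisj hFW]
    _ = ∑ Y ∈ C, ∑ U ∈ (Y \ F).powerset,
          (-1 : 𝕜) ^ U.card • (TU (Y \ F) * star (TU (Y \ F))) :=
        sum_sum_cliques_link_eq_sum_sum_powerset_sdiff hC hN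
          fun Y U => (-1 : 𝕜) ^ U.card • (TU (Y \ F) * star (TU (Y \ F)))
    _ = TU (F \ F) * star (TU (F \ F)) :=
        sum_sum_powerset_sdiff_neg_one_pow_card_smul ((hC F).2 ⟨hF, subset_rfl⟩)
          (fun Y hY => ((hC Y).1 hY).2) fun Y => TU (Y \ F) * star (TU (Y \ F))
    _ = 1 := by rw [Finset.sdiff_self, hTU_empty, star_one, mul_one]

open Classical in
/-- Let `Γ` be a finite simple graph and `T` a family of operators commuting along edges.
With `Z_V = ∑_{U ⊆ V, U clique} (-1)^|U| T_U T_U*` and, for a clique `W`, `N_W` the set of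
vertices outside `W` adjacent to every vertex of `W`, one has, for every clique `F`,
`∑_{W clique, F ⊆ W} T_{W∖F} Z_{N_W} (T_{W∖F})* = I`. -/
theorem stmt_10 {Λ : Type} [Fintype Λ] (Γ : SimpleGraph Λ)
    {H : Type} [NormedAddCommGroup H] [InnerProductSpace ℂ H] [CompleteSpace H]
    (T : Λ → H →L[ℂ] H)
    (hcomm : ∀ i j, Γ.Adj i j → Commute (T i) (T j))
    -- `TU U` is the product `∏_{i ∈ U} T i`, well defined for cliques `U`:
    (TU : Finset Λ → (H →L[ℂ] H))
    (hTU : ∀ (U : Finset Λ) (hU : Γ.IsClique (U : Set Λ)),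
      TU U = U.noncommProd T (fun i hi j hj hne => hcomm i j (hU hi hj hne)))
    -- `Z V = ∑_{U ⊆ V, U clique} (-1)^|U| T_U T_U*`:
    (Z : Finset Λ → (H →L[ℂ] H))
    (hZ : ∀ V : Finset Λ, Z V =
      ∑ U ∈ V.powerset.filter (fun U : Finset Λ => Γ.IsClique (U : Set Λ)),
        ((-1:ℂ) ^ U.card) • (TU U * ContinuousLinearMap.adjoint (TU U)))
    -- `N W` is the neighborhood of the clique `W`: vertices not in `W` adjacent to all of `W`:
    (N : Finset Λ → Finset Λ)
    (hN : ∀ W : Finset Λ, N W =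
      Finset.univ.filter (fun lam : Λ => lam ∉ W ∧ ∀ v ∈ W, Γ.Adj lam v)) :
    ∀ F : Finset Λ, Γ.IsClique (F : Set Λ) →
      ∑ W ∈ Finset.univ.filter (fun W : Finset Λ => Γ.IsClique (W : Set Λ) ∧ F ⊆ W),
        TU (W \ F) * Z (N W) * ContinuousLinearMap.adjoint (TU (W \ F)) = 1 := fun F hF =>
  stmt_10_general Γ T hcomm TU hTU Z hZ hF _ (by simp) N fun W _ => by simp [hN, cliqueLink]
end
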